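/- Let (X, μ) be a standard Borel probability space and let M be a set of admissible summable semimetrics on X that is precompact in the m-norm. Then the closure of M in L¹(X×X, μ×μ) coincides with its closure in the m-norm and consists only of admissible semimetrics; moreover, for every fixed ε>0 the ε-entropies H_ε(ρ, μ), ρ ∈ M, are uniformly bounded. In particular, if a sequence of admissible summable semimetrics converges in L¹ to an admissible semimetric, then for every ε>0 the ε-entropies of the members of the sequence are uniformly bounded. -/

import Mathlib

open MeasureTheory Filter Function Set
open scoped ENNReal

/-- A semimetric on `X`: a nonnegative function vanishing on the diagonal, symmetric and
satisfying the triangle inequality for all points. -/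
def IsSemimetric {X : Type*} (ρ : X → X → ℝ) : Prop :=
  (∀ x y, 0 ≤ ρ x y) ∧ (∀ x, ρ x x = 0) ∧ (∀ x y, ρ x y = ρ y x) ∧
    ∀ x y z, ρ x z ≤ ρ x y + ρ y z

/-- A metric on `X`: a semimetric that separates points. -/
def IsMetricFun {X : Type*} (ρ : X → X → ℝ) : Prop :=
  IsSemimetric ρ ∧ ∀ x y, ρ x y = 0 ↔ x = y

/-- The semimetric space `(S, ρ)` is separable. -/
def SeparableOn {X : Type*} (ρ : X → X → ℝ) (S : Set X) : Prop :=
  ∃ D : Set X, D ⊆ S ∧ D.Countable ∧ ∀ x ∈ S, ∀ ε : ℝ, 0 < ε → ∃ y ∈ D, ρ x y < ε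

/-- A semimetric is admissible for `(X, μ)` if it is measurable on `(X × X, μ × μ)` and
separable on a subset of full measure. -/
def Admissible {X : Type*} [MeasurableSpace X] (μ : Measure X) (ρ : X → X → ℝ) : Prop :=
  Measurable (Function.uncurry ρ) ∧
    ∃ S : Set X, MeasurableSet S ∧ μ Sᶜ = 0 ∧ SeparableOn ρ S

/-- An `ε`-cover of size `k`: `X = X₀ ∪ X₁ ∪ ⋯ ∪ X_k` with `μ(X₀) < ε` and
`diam_ρ(X_j) < ε` for `j = 1, …, k`. -/
def IsEpsCover {X : Type*} [MeasurableSpace X] (μ : Measure X) (ρ : X → X → ℝ)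
    (ε : ℝ) (k : ℕ) : Prop :=
  ∃ A : Fin (k + 1) → Set X, (∀ i, MeasurableSet (A i)) ∧ (⋃ i, A i) = Set.univ ∧
    μ (A 0) < ENNReal.ofReal ε ∧
    ∀ i, i ≠ 0 → ∀ x ∈ A i, ∀ y ∈ A i, ρ x y < ε

/-- The `ε`-entropy of `(X, μ, ρ)`: the binary logarithm of the smallest size of an
`ε`-cover, and `∞` if there is no finite `ε`-cover. -/
noncomputable def epsEntropy {X : Type*} [MeasurableSpace X] (μ : Measure X)
    (ρ : X → X → ℝ) (ε : ℝ) : ℝ≥0∞ :=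
  sInf {h : ℝ≥0∞ | ∃ k : ℕ, IsEpsCover μ ρ ε k ∧ h = ENNReal.ofReal (Real.logb 2 k)}

/-- The m-norm of `f`: the infimum of the `L¹`-norms of measurable semimetrics
dominating `|f|` almost everywhere (`∞` if there is no such semimetric). -/
noncomputable def mnorm {X : Type*} [MeasurableSpace X] (μ : Measure X)
    (f : X → X → ℝ) : ℝ≥0∞ :=
  sInf {c : ℝ≥0∞ | ∃ ρ : X → X → ℝ, IsSemimetric ρ ∧ Measurable (Function.uncurry ρ) ∧
    (∀ᵐ p ∂(μ.prod μ), |f p.1 p.2| ≤ ρ p.1 p.2) ∧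
    c = ∫⁻ p, ENNReal.ofReal (ρ p.1 p.2) ∂(μ.prod μ)}

/-- The m-distance between two functions. -/
noncomputable def mdist {X : Type*} [MeasurableSpace X] (μ : Measure X)
    (f g : X → X → ℝ) : ℝ≥0∞ :=
  mnorm μ fun x y => f x y - g x y

/-- The `L¹(X × X, μ × μ)` distance between two functions. -/
noncomputable def L1dist {X : Type*} [MeasurableSpace X] (μ : Measure X)
    (f g : X → X → ℝ) : ℝ≥0∞ :=
  ∫⁻ p, ENNReal.ofReal |f p.1 p.2 - g p.1 p.2| ∂(μ.prod μ)

/-- Total boundedness (precompactness) of a set of functions w.r.t. an extended distance. -/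
def TotallyBoundedIn {X : Type*} (d : (X → X → ℝ) → (X → X → ℝ) → ℝ≥0∞)
    (M : Set (X → X → ℝ)) : Prop :=
  ∀ ε : ℝ≥0∞, 0 < ε → ∃ T : Set (X → X → ℝ), T.Finite ∧ ∀ f ∈ M, ∃ g ∈ T, d f g < ε

/-!
The m-norm is a complete extended norm dominating the `L¹`-norm: if `∑ n, ‖f n‖_m < ∞`, the sum of
nearly optimal majorants is again a semimetric, finite almost everywhere. Hence a precompact `M` has
compact closure, and an `L¹`-convergent sequence in `M` has an m-convergent subsequence; both limits
are limits in measure, so they agree almost everywhere.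

The entropy does not see errors that are small in the m-norm: if `|ρ - σ| ≤ τ` with `τ` a semimetric
of small integral, then `τ` is small on `Y × Y` for some `Y` of almost full measure, so an `ε`-cover
for `σ` yields a coarser cover of the same size for `ρ`, where the allowed error does not depend on
that size. Finitely many `σ` thus control the entropies over `M` and give finite covers for points
of its closure. Convergence in measure only gives an error threshold depending on the size of the
cover, which suffices for a sequence with an admissible limit.
-/

section ExtendedNonneg

lemma limsup_add_le_add_limsup {ι : Type*} {l : Filter ι} (a b : ι → ℝ≥0∞) :
    limsup (fun i => a i + b i) l ≤ limsup a l + limsup b l := by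
  refine ENNReal.le_of_forall_pos_le_add fun ε hε hfin => ?_
  obtain ⟨ha, hb⟩ := ENNReal.add_lt_top.1 hfin
  have hε2 : (ε : ℝ≥0∞) / 2 ≠ 0 := (ENNReal.half_pos (ENNReal.coe_pos.2 hε).ne').ne'
  have hlt : ∀ᶠ i in l, a i + b i ≤ limsup a l + limsup b l + ε := by
    filter_upwards [eventually_lt_of_limsup_lt (ENNReal.lt_add_right ha.ne hε2),
      eventually_lt_of_limsup_lt (ENNReal.lt_add_right hb.ne hε2)] with i hai hbi
    calc a i + b i ≤ (limsup a l + ε / 2) + (limsup b l + ε / 2) := add_le_add hai.le hbi.le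
      _ = limsup a l + limsup b l + ε := by rw [add_add_add_comm, ENNReal.add_halves]
  exact limsup_le_of_le (h := hlt)

lemma exists_ne_top_forall_mem_le {ι : Type*} {s : Set ι} (hs : s.Finite) {u : ι → ℝ≥0∞}
    (hu : ∀ i ∈ s, u i ≠ ∞) : ∃ C : ℝ≥0∞, C ≠ ∞ ∧ ∀ i ∈ s, u i ≤ C :=
  ⟨∑ i ∈ hs.toFinset, u i, ENNReal.sum_ne_top.2 fun i hi => hu i (hs.mem_toFinset.1 hi),
    fun _ hi => Finset.single_le_sum (fun _ _ => zero_le) (hs.mem_toFinset.2 hi)⟩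

lemma exists_ne_top_forall_le_of_eventually_le {u : ℕ → ℝ≥0∞} (hu : ∀ n, u n ≠ ∞)
    {C : ℝ≥0∞} (hC : C ≠ ∞) (h : ∀ᶠ n in atTop, u n ≤ C) :
    ∃ C' : ℝ≥0∞, C' ≠ ∞ ∧ ∀ n, u n ≤ C' := by
  rw [← Nat.cofinite_eq_atTop, eventually_cofinite] at h
  obtain ⟨B, hB, hle⟩ := exists_ne_top_forall_mem_le h fun n _ => hu n
  refine ⟨max B C, max_ne_top hB hC, fun n => ?_⟩
  by_cases hn : u n ≤ C
  · exact hn.trans (le_max_right B C)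
  · exact (hle n hn).trans (le_max_left B C)

end ExtendedNonneg

lemma exists_mem_measure_preimage_prodMk_lt {X Y : Type*} [MeasurableSpace X] [MeasurableSpace Y]
    {μ : Measure X} {ν : Measure Y} [SFinite ν] {s : Set (X × Y)} (hs : MeasurableSet s)
    {A : Set X} {a : ℝ≥0∞} (h : μ.prod ν s < a * μ A) :
    ∃ x ∈ A, ν (Prod.mk x ⁻¹' s) < a := by
  by_contra! hle
  refine h.not_ge ?_
  calc a * μ A = ∫⁻ _ in A, a ∂μ := (setLIntegral_const A a).symm
    _ ≤ ∫⁻ x in A, ν (Prod.mk x ⁻¹' s) ∂μ :=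
      setLIntegral_mono (measurable_measure_prodMk_left hs) hle
    _ ≤ ∫⁻ x, ν (Prod.mk x ⁻¹' s) ∂μ := setLIntegral_le_lintegral _ _
    _ = μ.prod ν s := (Measure.prod_apply hs).symm

section Semimetric

variable {X : Type*} {ρ : X → X → ℝ}

lemma IsSemimetric.nonneg (h : IsSemimetric ρ) (x y : X) : 0 ≤ ρ x y := h.1 x y

lemma IsSemimetric.self (h : IsSemimetric ρ) (x : X) : ρ x x = 0 := h.2.1 x

lemma IsSemimetric.comm (h : IsSemimetric ρ) (x y : X) : ρ x y = ρ y x := h.2.2.1 x y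

lemma IsSemimetric.triangle (h : IsSemimetric ρ) (x y z : X) : ρ x z ≤ ρ x y + ρ y z :=
  h.2.2.2 x y z

/-- A semimetric that may take the value `∞`; unlike real-valued semimetrics, these are closed
under countable sums and upper limits. -/
structure IsExtendedSemimetric (τ : X → X → ℝ≥0∞) : Prop where
  self : ∀ x, τ x x = 0
  comm : ∀ x y, τ x y = τ y x
  triangle : ∀ x y z, τ x z ≤ τ x y + τ y z

lemma IsSemimetric.ofReal (h : IsSemimetric ρ) :
    IsExtendedSemimetric fun x y => ENNReal.ofReal (ρ x y) where
  self x := by simp only [h.self, ENNReal.ofReal_zero]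
  comm x y := by rw [h.comm]
  triangle x y z := by
    rw [← ENNReal.ofReal_add (h.nonneg x y) (h.nonneg y z)]
    exact ENNReal.ofReal_le_ofReal (h.triangle x y z)

namespace IsExtendedSemimetric

protected lemma tsum {ι : Type*} {τ : ι → X → X → ℝ≥0∞} (h : ∀ i, IsExtendedSemimetric (τ i)) :
    IsExtendedSemimetric fun x y => ∑' i, τ i x y where
  self x := by simp only [(h _).self, tsum_zero]
  comm x y := by simp only [(h _).comm x y]
  triangle x y z := by
    rw [← ENNReal.tsum_add]
    exact ENNReal.tsum_le_tsum fun i => (h i).triangle x y z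

protected lemma limsup {ι : Type*} {l : Filter ι} {τ : ι → X → X → ℝ≥0∞}
    (h : ∀ i, IsExtendedSemimetric (τ i)) :
    IsExtendedSemimetric fun x y => limsup (fun i => τ i x y) l where
  self x := by simp only [(h _).self, ← bot_eq_zero', limsup_const_bot]
  comm x y := by simp only [(h _).comm x y]
  triangle x y z :=
    (limsup_le_limsup (Eventually.of_forall fun i => (h i).triangle x y z)).trans
      (limsup_add_le_add_limsup _ _)

lemma toReal_comp {τ : X → X → ℝ≥0∞} (h : IsExtendedSemimetric τ) {Y : Type*} {π : Y → X}
    (hfin : ∀ x y, τ (π x) (π y) ≠ ∞) :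
    IsSemimetric fun x y => (τ (π x) (π y)).toReal := by
  refine ⟨fun _ _ => ENNReal.toReal_nonneg, fun x => ?_, fun x y => ?_, fun x y z => ?_⟩
  · simp only [h.self, ENNReal.toReal_zero]
  · simp only [h.comm (π x)]
  · rw [← ENNReal.toReal_add (hfin x y) (hfin y z)]
    exact ENNReal.toReal_mono (ENNReal.add_ne_top.2 ⟨hfin x y, hfin y z⟩) (h.triangle _ _ _)

lemma exists_isSemimetric_ae_eq [MeasurableSpace X] {μ : Measure X} [SFinite μ]
    {τ : X → X → ℝ≥0∞} (h : IsExtendedSemimetric τ) (hm : Measurable (uncurry τ))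
    (hfin : ∀ᵐ p ∂(μ.prod μ), τ p.1 p.2 ≠ ∞) :
    ∃ ρ : X → X → ℝ, IsSemimetric ρ ∧ Measurable (uncurry ρ) ∧
      ∀ᵐ p ∂(μ.prod μ), ENNReal.ofReal (ρ p.1 p.2) = τ p.1 p.2 := by
  classical
  rcases eq_zero_or_neZero μ with rfl | _
  · refine ⟨fun _ _ => 0, ⟨by simp, by simp, by simp, by simp⟩, measurable_const, by simp⟩
  obtain ⟨x₀, hx₀⟩ := (Measure.ae_ae_of_ae_prod hfin).exists
  -- Points at infinite distance from a generic `x₀` form a null set; they are sent to `x₀`.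
  let π : X → X := fun y => if τ x₀ y ≠ ∞ then y else x₀
  have hπm : Measurable π := Measurable.ite
    (hm.comp measurable_prodMk_left (measurableSet_singleton ∞)).compl measurable_id
    measurable_const
  have hx₀π (y : X) : τ x₀ (π y) ≠ ∞ := by
    by_cases hy : τ x₀ y = ∞
    · simp [π, hy, h.self]
    · simp [π, hy]
  have hπ (x y : X) : τ (π x) (π y) ≠ ∞ :=
    ne_top_of_le_ne_top (ENNReal.add_ne_top.2 ⟨h.comm x₀ (π x) ▸ hx₀π x, hx₀π y⟩)
      (h.triangle _ x₀ _)
  refine ⟨_, h.toReal_comp hπ, ?_, ?_⟩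
  · exact (hm.comp ((hπm.comp measurable_fst).prodMk (hπm.comp measurable_snd))).ennreal_toReal
  · filter_upwards [Measure.quasiMeasurePreserving_fst.ae hx₀,
      Measure.quasiMeasurePreserving_snd.ae hx₀] with p h1 h2
    rw [ENNReal.ofReal_toReal (hπ _ _)]
    simp only [π, if_pos h1, if_pos h2]

end IsExtendedSemimetric

lemma exists_isSemimetric_ae_eq_of_ae_tendsto [MeasurableSpace X] {μ : Measure X} [SFinite μ]
    {f : X → X → ℝ} {v : ℕ → X → X → ℝ} (hv : ∀ n, IsSemimetric (v n))
    (hvm : ∀ n, Measurable (uncurry (v n)))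
    (hlim : ∀ᵐ p ∂(μ.prod μ), Tendsto (fun n => v n p.1 p.2) atTop (nhds (f p.1 p.2))) :
    ∃ g : X → X → ℝ, IsSemimetric g ∧ Measurable (uncurry g) ∧
      uncurry f =ᵐ[μ.prod μ] uncurry g := by
  let G : X → X → ℝ≥0∞ := fun x y => limsup (fun n => ENNReal.ofReal (v n x y)) atTop
  have hGf : ∀ᵐ p ∂(μ.prod μ), G p.1 p.2 = ENNReal.ofReal (f p.1 p.2) :=
    hlim.mono fun p hp => (ENNReal.tendsto_ofReal hp).limsup_eq
  have hGm : Measurable (uncurry G) := Measurable.limsup fun n => (hvm n).ennreal_ofReal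
  obtain ⟨g, hg, hgm, hgG⟩ :=
    (IsExtendedSemimetric.limsup fun n => (hv n).ofReal).exists_isSemimetric_ae_eq hGm
      (hGf.mono fun p hp => hp.trans_ne ENNReal.ofReal_ne_top)
  refine ⟨g, hg, hgm, ?_⟩
  filter_upwards [hlim, hGf, hgG] with p hp hpf hpg
  have hf0 : 0 ≤ f p.1 p.2 := ge_of_tendsto' hp fun n => (hv n).nonneg _ _
  exact (ENNReal.ofReal_eq_ofReal_iff hf0 (hg.nonneg _ _)).1 (hpf.symm.trans hpg.symm)

end Semimetric

section MNorm

variable {X : Type*} [MeasurableSpace X] {μ : Measure X} {f g : X → X → ℝ}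

/-- The measurable semimetric `τ` dominates `|f|` almost everywhere; the m-norm of `f` is the
infimum of the `L¹`-norms of such `τ`. -/
structure IsMajorant (μ : Measure X) (f τ : X → X → ℝ) : Prop where
  isSemimetric : IsSemimetric τ
  measurable : Measurable (uncurry τ)
  abs_le : ∀ᵐ p ∂(μ.prod μ), |f p.1 p.2| ≤ τ p.1 p.2

lemma mnorm_lt_iff {c : ℝ≥0∞} :
    mnorm μ f < c ↔
      ∃ τ, IsMajorant μ f τ ∧ ∫⁻ p, ENNReal.ofReal (τ p.1 p.2) ∂(μ.prod μ) < c := by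
  rw [mnorm, sInf_lt_iff]
  constructor
  · rintro ⟨_, ⟨τ, hτ, hτm, hle, rfl⟩, hlt⟩
    exact ⟨τ, ⟨hτ, hτm, hle⟩, hlt⟩
  · rintro ⟨τ, hτ, hlt⟩
    exact ⟨_, ⟨τ, hτ.isSemimetric, hτ.measurable, hτ.abs_le, rfl⟩, hlt⟩

lemma IsMajorant.mnorm_le {τ : X → X → ℝ} (hτ : IsMajorant μ f τ) :
    mnorm μ f ≤ ∫⁻ p, ENNReal.ofReal (τ p.1 p.2) ∂(μ.prod μ) :=
  sInf_le ⟨τ, hτ.isSemimetric, hτ.measurable, hτ.abs_le, rfl⟩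

lemma IsMajorant.enorm_le {τ : X → X → ℝ} (hτ : IsMajorant μ f τ) :
    ∀ᵐ p ∂(μ.prod μ), ‖f p.1 p.2‖ₑ ≤ ENNReal.ofReal (τ p.1 p.2) := by
  filter_upwards [hτ.abs_le] with p hp
  rw [Real.enorm_eq_ofReal_abs]
  exact ENNReal.ofReal_le_ofReal hp

lemma IsMajorant.exists_measure_le_lt [SFinite μ] {τ : X → X → ℝ} (hτ : IsMajorant μ f τ) {r : ℝ}
    {c : ℝ≥0∞}
    (hlt : ∫⁻ p, ENNReal.ofReal (τ p.1 p.2) ∂(μ.prod μ) < ENNReal.ofReal r * (c * μ univ)) :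
    ∃ x, μ {y | r ≤ τ x y} < c := by
  have hprod : μ.prod μ {p | r ≤ τ p.1 p.2} < c * μ univ := by
    refine lt_of_mul_lt_mul_left' (lt_of_le_of_lt ?_ hlt)
    calc ENNReal.ofReal r * μ.prod μ {p | r ≤ τ p.1 p.2}
        ≤ ENNReal.ofReal r * μ.prod μ {p | ENNReal.ofReal r ≤ ENNReal.ofReal (τ p.1 p.2)} := by
          gcongr with p
          exact ENNReal.ofReal_le_ofReal
      _ ≤ ∫⁻ p, ENNReal.ofReal (τ p.1 p.2) ∂(μ.prod μ) :=
          mul_meas_ge_le_lintegral hτ.measurable.ennreal_ofReal _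
  obtain ⟨x, -, hx⟩ :=
    exists_mem_measure_preimage_prodMk_lt (measurableSet_le measurable_const hτ.measurable) hprod
  exact ⟨x, hx⟩

lemma lintegral_enorm_le_mnorm (μ : Measure X) (f : X → X → ℝ) :
    ∫⁻ p, ‖f p.1 p.2‖ₑ ∂(μ.prod μ) ≤ mnorm μ f := by
  refine le_of_forall_gt fun c hc => ?_
  obtain ⟨τ, hτ, hlt⟩ := mnorm_lt_iff.1 hc
  exact (lintegral_mono_ae hτ.enorm_le).trans_lt hlt

lemma mul_measure_le_enorm_le_mnorm [SFinite μ] (f : X → X → ℝ) (c : ℝ≥0∞) :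
    c * μ.prod μ {p | c ≤ ‖f p.1 p.2‖ₑ} ≤ mnorm μ f := by
  refine le_of_forall_gt fun a ha => ?_
  obtain ⟨τ, hτ, hlt⟩ := mnorm_lt_iff.1 ha
  refine lt_of_le_of_lt ?_ hlt
  calc c * μ.prod μ {p | c ≤ ‖f p.1 p.2‖ₑ}
      ≤ c * μ.prod μ {p | c ≤ ENNReal.ofReal (τ p.1 p.2)} := by
        gcongr 1
        exact measure_mono_ae (hτ.enorm_le.mono fun p hp hcp => hcp.trans hp)
    _ ≤ ∫⁻ p, ENNReal.ofReal (τ p.1 p.2) ∂(μ.prod μ) :=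
        mul_meas_ge_le_lintegral hτ.measurable.ennreal_ofReal c

lemma exists_isMajorant_tsum_lintegral_lt {ι : Type*} [Countable ι] {g : ι → X → X → ℝ}
    {c : ℝ≥0∞} (hc : ∑' i, mnorm μ (g i) < c) :
    ∃ τ : ι → X → X → ℝ, (∀ i, IsMajorant μ (g i) (τ i)) ∧
      ∑' i, ∫⁻ p, ENNReal.ofReal (τ i p.1 p.2) ∂(μ.prod μ) < c := by
  obtain ⟨δ, hδ, hδc⟩ := ENNReal.exists_pos_sum_of_countable' (tsub_pos_of_lt hc).ne' ι
  have hfin : ∑' i, mnorm μ (g i) ≠ ∞ := hc.ne_top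
  have hlt (i : ι) : mnorm μ (g i) < mnorm μ (g i) + δ i :=
    ENNReal.lt_add_right (ENNReal.ne_top_of_tsum_ne_top hfin i) (hδ i).ne'
  choose τ hτ hτlt using fun i => mnorm_lt_iff.1 (hlt i)
  refine ⟨τ, hτ, ?_⟩
  calc ∑' i, ∫⁻ p, ENNReal.ofReal (τ i p.1 p.2) ∂(μ.prod μ)
      ≤ ∑' i, (mnorm μ (g i) + δ i) := ENNReal.tsum_le_tsum fun i => (hτlt i).le
    _ = ∑' i, mnorm μ (g i) + ∑' i, δ i := ENNReal.tsum_add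
    _ < c := lt_tsub_iff_left.1 hδc

lemma tsum_enorm_le_tsum_of_isMajorant {ι : Type*} [Countable ι] {g τ : ι → X → X → ℝ}
    (hτ : ∀ i, IsMajorant μ (g i) (τ i)) :
    ∀ᵐ p ∂(μ.prod μ), ∑' i, ‖g i p.1 p.2‖ₑ ≤ ∑' i, ENNReal.ofReal (τ i p.1 p.2) := by
  filter_upwards [ae_all_iff.2 fun i => (hτ i).enorm_le] with p hp
  exact ENNReal.tsum_le_tsum hp

lemma ae_tsum_enorm_ne_top {ι : Type*} [Countable ι] {g : ι → X → X → ℝ}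
    (hg : ∑' i, mnorm μ (g i) ≠ ∞) : ∀ᵐ p ∂(μ.prod μ), ∑' i, ‖g i p.1 p.2‖ₑ ≠ ∞ := by
  obtain ⟨τ, hτ, hlt⟩ := exists_isMajorant_tsum_lintegral_lt hg.lt_top
  have hτm (i : ι) : Measurable fun p : X × X => ENNReal.ofReal (τ i p.1 p.2) :=
    (hτ i).measurable.ennreal_ofReal
  rw [← lintegral_tsum fun i => (hτm i).aemeasurable] at hlt
  filter_upwards [ae_lt_top (Measurable.tsum hτm) hlt.ne,
    tsum_enorm_le_tsum_of_isMajorant hτ] with p hfin hle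
  exact (hle.trans_lt hfin).ne

lemma mnorm_le_tsum [SFinite μ] {ι : Type*} [Countable ι] {g : ι → X → X → ℝ}
    (hfg : ∀ᵐ p ∂(μ.prod μ), ‖f p.1 p.2‖ₑ ≤ ∑' i, ‖g i p.1 p.2‖ₑ) :
    mnorm μ f ≤ ∑' i, mnorm μ (g i) := by
  refine le_of_forall_gt fun c hc => ?_
  obtain ⟨τ, hτ, hlt⟩ := exists_isMajorant_tsum_lintegral_lt hc
  have hτm (i : ι) : Measurable fun p : X × X => ENNReal.ofReal (τ i p.1 p.2) :=
    (hτ i).measurable.ennreal_ofReal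
  rw [← lintegral_tsum fun i => (hτm i).aemeasurable] at hlt
  obtain ⟨ρ, hρ, hρm, hρτ⟩ :=
    (IsExtendedSemimetric.tsum fun i => (hτ i).isSemimetric.ofReal).exists_isSemimetric_ae_eq
      (Measurable.tsum hτm) ((ae_lt_top (Measurable.tsum hτm) hlt.ne_top).mono fun _ => LT.lt.ne)
  have hfρ : IsMajorant μ f ρ := by
    refine ⟨hρ, hρm, ?_⟩
    filter_upwards [hfg, tsum_enorm_le_tsum_of_isMajorant hτ, hρτ] with p hfp hle hρp
    rw [← ENNReal.ofReal_le_ofReal_iff (hρ.nonneg _ _), ← Real.enorm_eq_ofReal_abs, hρp]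
    exact hfp.trans hle
  exact (hfρ.mnorm_le.trans_eq (lintegral_congr_ae hρτ)).trans_lt hlt

lemma mdist_eq_zero_of_ae_eq (hfg : uncurry f =ᵐ[μ.prod μ] uncurry g) : mdist μ f g = 0 := by
  have h0 : IsMajorant μ (fun x y => f x y - g x y) fun _ _ => 0 := by
    refine ⟨⟨by simp, by simp, by simp, by simp⟩, measurable_const, ?_⟩
    filter_upwards [hfg] with p hp
    exact (abs_eq_zero.2 (sub_eq_zero.2 hp)).le
  simpa [mdist] using h0.mnorm_le

lemma mdist_comm (μ : Measure X) (f g : X → X → ℝ) : mdist μ f g = mdist μ g f := by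
  simp only [mdist, mnorm, abs_sub_comm (f _ _)]

lemma mdist_triangle [SFinite μ] (f g h : X → X → ℝ) :
    mdist μ f h ≤ mdist μ f g + mdist μ g h := by
  have hsum := mnorm_le_tsum (μ := μ) (f := fun x y => f x y - h x y)
    (g := fun b : Bool => if b then (fun x y => f x y - g x y) else fun x y => g x y - h x y) <|
    Eventually.of_forall fun p => by
      simpa [tsum_bool, add_comm, edist_eq_enorm_sub] using
        edist_triangle (f p.1 p.2) (g p.1 p.2) (h p.1 p.2)
  simpa [tsum_bool, add_comm, mdist] using hsum

lemma L1dist_eq_lintegral_edist (μ : Measure X) (f g : X → X → ℝ) :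
    L1dist μ f g = ∫⁻ p, edist (f p.1 p.2) (g p.1 p.2) ∂(μ.prod μ) := by
  simp only [L1dist, edist_eq_enorm_sub, Real.enorm_eq_ofReal_abs]

lemma L1dist_comm (μ : Measure X) (f g : X → X → ℝ) : L1dist μ f g = L1dist μ g f := by
  simp only [L1dist, abs_sub_comm (f _ _)]

lemma L1dist_le_mdist (μ : Measure X) (f g : X → X → ℝ) : L1dist μ f g ≤ mdist μ f g := by
  rw [L1dist_eq_lintegral_edist]
  simpa only [mdist, edist_eq_enorm_sub] using lintegral_enorm_le_mnorm μ fun x y => f x y - g x y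

lemma tendstoInMeasure_of_tendsto_mdist [SFinite μ] {ι : Type*} {l : Filter ι}
    {v : ι → X → X → ℝ} (hv : Tendsto (fun i => mdist μ (v i) f) l (nhds 0)) :
    TendstoInMeasure (μ.prod μ) (fun i => uncurry (v i)) l (uncurry f) := by
  refine tendstoInMeasure_of_ne_top fun ε hε hεtop => ?_
  have hle (i : ι) : μ.prod μ {p | ε ≤ edist (uncurry (v i) p) (uncurry f p)} ≤
      ε⁻¹ * mdist μ (v i) f := by
    rw [← ENNReal.div_eq_inv_mul, ENNReal.le_div_iff_mul_le (.inl hε.ne') (.inl hεtop), mul_comm]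
    simp only [edist_eq_enorm_sub]
    exact mul_measure_le_enorm_le_mnorm _ ε
  refine tendsto_of_tendsto_of_tendsto_of_le_of_le tendsto_const_nhds ?_ (fun _ => zero_le) hle
  simpa using ENNReal.Tendsto.const_mul hv (.inr (ENNReal.inv_ne_top.2 hε.ne'))

lemma tendstoInMeasure_of_tendsto_L1dist {ι : Type*} {l : Filter ι}
    {v : ι → X → X → ℝ} (hvm : ∀ i, Measurable (uncurry (v i))) (hf : Measurable (uncurry f))
    (hv : Tendsto (fun i => L1dist μ (v i) f) l (nhds 0)) :
    TendstoInMeasure (μ.prod μ) (fun i => uncurry (v i)) l (uncurry f) := by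
  refine tendstoInMeasure_of_tendsto_eLpNorm one_ne_zero
    (fun i => (hvm i).aestronglyMeasurable) hf.aestronglyMeasurable ?_
  simpa only [L1dist_eq_lintegral_edist, edist_eq_enorm_sub, eLpNorm_one_eq_lintegral_enorm,
    Pi.sub_apply, uncurry_def] using hv

lemma mdist_le_tsum_of_ae_tendsto [SFinite μ] {v : ℕ → X → X → ℝ}
    (hv : ∀ᵐ p ∂(μ.prod μ), Tendsto (fun n => v n p.1 p.2) atTop (nhds (f p.1 p.2))) (n : ℕ) :
    mdist μ (v n) f ≤ ∑' m, mdist μ (v (n + m)) (v (n + m + 1)) := by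
  refine mnorm_le_tsum (hv.mono fun p hp => ?_)
  simpa only [edist_eq_enorm_sub] using
    edist_le_tsum_of_edist_le_of_tendsto (fun m => edist (v m p.1 p.2) (v (m + 1) p.1 p.2))
      (fun m => le_rfl) hp n

lemma exists_tendsto_mdist_of_tsum_ne_top [SFinite μ] {v : ℕ → X → X → ℝ}
    (hv : ∑' n, mdist μ (v n) (v (n + 1)) ≠ ∞) :
    ∃ f, Tendsto (fun n => mdist μ (v n) f) atTop (nhds 0) := by
  let f : X → X → ℝ := fun x y => limUnder atTop fun n => v n x y
  have hlim : ∀ᵐ p ∂(μ.prod μ), Tendsto (fun n => v n p.1 p.2) atTop (nhds (f p.1 p.2)) := by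
    filter_upwards [ae_tsum_enorm_ne_top hv] with p hp
    refine (cauchySeq_of_edist_le_of_tsum_ne_top _ (fun n => ?_) hp).tendsto_limUnder
    exact (edist_eq_enorm_sub _ _).le
  refine ⟨f, tendsto_of_tendsto_of_tendsto_of_le_of_le tendsto_const_nhds ?_ (fun _ => zero_le)
    (mdist_le_tsum_of_ae_tendsto hlim)⟩
  simpa only [add_comm] using ENNReal.tendsto_sum_nat_add _ hv

/-- The functions on `X × X`, carrying the extended m-distance as their pseudo-emetric. -/
def MNormSpace {X : Type*} [MeasurableSpace X] (_μ : Measure X) : Type _ := X → X → ℝ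

noncomputable instance [SFinite μ] : PseudoEMetricSpace (MNormSpace μ) where
  edist := mdist μ
  edist_self _ := mdist_eq_zero_of_ae_eq .rfl
  edist_comm := mdist_comm μ
  edist_triangle := mdist_triangle

instance [SFinite μ] : CompleteSpace (MNormSpace μ) := by
  refine EMetric.complete_of_convergent_controlled_sequences (fun n => 2⁻¹ ^ n)
    (fun n => ENNReal.pow_pos (by simp) n) fun v hv => ?_
  have hsum : ∑' n, mdist μ (v n) (v (n + 1)) ≠ ∞ :=
    ne_top_of_le_ne_top (by simp [ENNReal.tsum_geometric])
      (ENNReal.tsum_le_tsum fun n => (hv n n (n + 1) le_rfl n.le_succ).le)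
  obtain ⟨f, hf⟩ := exists_tendsto_mdist_of_tsum_ne_top hsum
  exact ⟨f, tendsto_iff_edist_tendsto_0.2 hf⟩

end MNorm

section Closure

/-- Membership in the closure of a set of functions w.r.t. an extended distance. -/
def MemClosureIn {X : Type*} (d : (X → X → ℝ) → (X → X → ℝ) → ℝ≥0∞) (M : Set (X → X → ℝ))
    (f : X → X → ℝ) : Prop :=
  ∀ ε : ℝ≥0∞, 0 < ε → ∃ σ ∈ M, d f σ < ε

namespace MemClosureIn

variable {X : Type*} {d d' : (X → X → ℝ) → (X → X → ℝ) → ℝ≥0∞} {M : Set (X → X → ℝ)}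
  {f g : X → X → ℝ}

lemma of_le (hf : MemClosureIn d M f) (h : ∀ σ ∈ M, d' g σ ≤ d f σ) : MemClosureIn d' M g :=
  fun ε hε =>
    let ⟨σ, hσ, hlt⟩ := hf ε hε
    ⟨σ, hσ, (h σ hσ).trans_lt hlt⟩

lemma exists_seq_tendsto (hf : MemClosureIn d M f) :
    ∃ v : ℕ → X → X → ℝ, (∀ n, v n ∈ M) ∧ Tendsto (fun n => d f (v n)) atTop (nhds 0) := by
  choose v hvM hv using fun n : ℕ => hf (2⁻¹ ^ n) (ENNReal.pow_pos (by simp) n)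
  exact ⟨v, hvM, tendsto_of_tendsto_of_tendsto_of_le_of_le tendsto_const_nhds
    (ENNReal.tendsto_pow_atTop_nhds_zero_of_lt_one (by simp)) (fun _ => zero_le) fun n => (hv n).le⟩

end MemClosureIn

variable {X : Type*} [MeasurableSpace X] {μ : Measure X} {M : Set (X → X → ℝ)}
  {f g : X → X → ℝ}

lemma memClosureIn_mdist_iff_mem_closure [SFinite μ] {M : Set (MNormSpace μ)}
    {f : MNormSpace μ} : MemClosureIn (mdist μ) M f ↔ f ∈ closure M :=
  (EMetric.mem_closure_iff (α := MNormSpace μ)).symm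

lemma totallyBoundedIn_mdist_iff [SFinite μ] {M : Set (MNormSpace μ)} :
    TotallyBoundedIn (mdist μ) M ↔ TotallyBounded M := by
  simp only [EMetric.totallyBounded_iff, subset_def, mem_iUnion₂, Metric.mem_eball, exists_prop]
  rfl

lemma MemClosureIn.congr_ae [SFinite μ] (hf : MemClosureIn (mdist μ) M f)
    (hgf : uncurry g =ᵐ[μ.prod μ] uncurry f) : MemClosureIn (mdist μ) M g :=
  hf.of_le fun σ _ => (mdist_triangle g f σ).trans_eq <| by
    rw [mdist_eq_zero_of_ae_eq hgf, zero_add]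

lemma MemClosureIn.exists_seq_tendstoInMeasure (hM : ∀ σ ∈ M, Measurable (uncurry σ))
    (hfm : Measurable (uncurry f)) (hf : MemClosureIn (L1dist μ) M f) :
    ∃ v : ℕ → X → X → ℝ, (∀ n, v n ∈ M) ∧
      TendstoInMeasure (μ.prod μ) (fun n => uncurry (v n)) atTop (uncurry f) := by
  obtain ⟨v, hvM, hv⟩ := hf.exists_seq_tendsto
  simp only [L1dist_comm μ f] at hv
  exact ⟨v, hvM, tendstoInMeasure_of_tendsto_L1dist (fun n => hM _ (hvM n)) hfm hv⟩

theorem memClosureIn_L1dist_iff_mdist [SFinite μ] (hM : ∀ σ ∈ M, Measurable (uncurry σ))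
    (hpre : TotallyBoundedIn (mdist μ) M) (hfm : Measurable (uncurry f)) :
    MemClosureIn (L1dist μ) M f ↔ MemClosureIn (mdist μ) M f := by
  refine ⟨fun hf => ?_, fun hf => hf.of_le fun σ _ => L1dist_le_mdist μ f σ⟩
  obtain ⟨v, hvM, hvf⟩ := hf.exists_seq_tendstoInMeasure hM hfm
  have hcompact : IsCompact (closure (X := MNormSpace μ) M) :=
    (totallyBoundedIn_mdist_iff.1 hpre).closure.isCompact_of_isClosed isClosed_closure
  obtain ⟨g, hg, φ, hφ, hvg⟩ := hcompact.tendsto_subseq fun n => subset_closure (hvM n)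
  have hfg : uncurry f =ᵐ[μ.prod μ] uncurry g :=
    tendstoInMeasure_ae_unique (hvf.comp hφ.tendsto_atTop)
      (tendstoInMeasure_of_tendsto_mdist (tendsto_iff_edist_tendsto_0.1 hvg))
  exact (memClosureIn_mdist_iff_mem_closure.2 hg).congr_ae hfg

lemma MemClosureIn.exists_isSemimetric_ae_eq [SFinite μ]
    (hM : ∀ σ ∈ M, IsSemimetric σ ∧ Measurable (uncurry σ)) (hfm : Measurable (uncurry f))
    (hf : MemClosureIn (L1dist μ) M f) :
    ∃ g : X → X → ℝ, IsSemimetric g ∧ Measurable (uncurry g) ∧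
      uncurry f =ᵐ[μ.prod μ] uncurry g := by
  obtain ⟨v, hvM, hv⟩ := hf.exists_seq_tendstoInMeasure (fun σ hσ => (hM σ hσ).2) hfm
  obtain ⟨φ, -, hφ⟩ := hv.exists_seq_tendsto_ae
  exact exists_isSemimetric_ae_eq_of_ae_tendsto (fun n => (hM _ (hvM (φ n))).1)
    (fun n => (hM _ (hvM (φ n))).2) hφ

end Closure

section SeparableOn

variable {X : Type*} {ρ : X → X → ℝ} {S : Set X}

lemma SeparableOn.exists_seq_forall_exists_lt (h : SeparableOn ρ S)
    (hS : S.Nonempty) : ∃ d : ℕ → X, ∀ x ∈ S, ∀ δ : ℝ, 0 < δ → ∃ n, ρ x (d n) < δ := by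
  obtain ⟨D, -, hDc, hD⟩ := h
  obtain ⟨x, hx⟩ := hS
  obtain ⟨y, hy, -⟩ := hD x hx 1 one_pos
  obtain ⟨d, rfl⟩ := hDc.exists_eq_range ⟨y, hy⟩
  exact ⟨d, fun x hx δ hδ => exists_range_iff.1 (hD x hx δ hδ)⟩

lemma separableOn_of_forall_exists_mem {ι : Type*} [Countable ι] {A : ι → Set X}
    (h : ∀ x ∈ S, ∀ δ : ℝ, 0 < δ → ∃ i, x ∈ A i ∧ ∀ y ∈ A i, ρ x y < δ) : SeparableOn ρ S := by
  choose d hd using fun i : {i // (A i ∩ S).Nonempty} => i.2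
  refine ⟨range d, range_subset_iff.2 fun i => (hd i).2, countable_range d, fun x hx δ hδ => ?_⟩
  obtain ⟨i, hxi, hi⟩ := h x hx δ hδ
  exact ⟨_, mem_range_self ⟨i, x, hxi, hx⟩, hi _ (hd ⟨i, x, hxi, hx⟩).1⟩

end SeparableOn

section EpsEntropy

variable {X : Type*} [MeasurableSpace X] {μ : Measure X} {ρ g : X → X → ℝ} {ε : ℝ} {k : ℕ}

lemma isEpsCover_iff :
    IsEpsCover μ ρ ε k ↔ ∃ (E : Set X) (A : Fin k → Set X), MeasurableSet E ∧
      (∀ j, MeasurableSet (A j)) ∧ (E ∪ ⋃ j, A j) = univ ∧ μ E < ENNReal.ofReal ε ∧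
      ∀ j, ∀ x ∈ A j, ∀ y ∈ A j, ρ x y < ε := by
  have hunion (E : Set X) (A : Fin k → Set X) :
      ⋃ i, (Fin.cons E A : Fin (k + 1) → Set X) i = E ∪ ⋃ j, A j := by
    ext x
    simp
  rw [IsEpsCover, Fin.exists_fin_succ_pi]
  simp [Fin.forall_fin_succ, hunion, and_assoc]

lemma isEpsCover_of_measure_univ_lt (h : μ univ < ENNReal.ofReal ε) : IsEpsCover μ ρ ε k :=
  isEpsCover_iff.2 ⟨univ, fun _ => ∅, .univ, fun _ => .empty, univ_union _, h,
    fun _ _ hx => hx.elim⟩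

lemma isEpsCover_of_centers (hρ : IsSemimetric ρ) (hρm : Measurable (uncurry ρ)) (c : Fin k → X)
    (h : μ {y | ∀ j, ε / 2 ≤ ρ (c j) y} < ENNReal.ofReal ε) : IsEpsCover μ ρ ε k := by
  have hsec (x : X) : Measurable (ρ x) := hρm.comp measurable_prodMk_left
  refine isEpsCover_iff.2 ⟨_, fun j => {y | ρ (c j) y < ε / 2}, ?_,
    fun j => measurableSet_lt (hsec _) measurable_const, ?_, h, fun j x hx y hy => ?_⟩
  · rw [ofPred_forall]
    exact .iInter fun j => measurableSet_le measurable_const (hsec _)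
  · ext y
    simp [or_iff_not_imp_left]
  · calc ρ x y ≤ ρ (c j) x + ρ (c j) y := hρ.comm x (c j) ▸ hρ.triangle x (c j) y
      _ < ε / 2 + ε / 2 := add_lt_add hx hy
      _ = ε := add_halves ε

lemma isEpsCover_of_centers_of_pieces (hρ : IsSemimetric ρ) (hρm : Measurable (uncurry ρ))
    {E : Set X} {A : Fin k → Set X} (hEA : (E ∪ ⋃ j, A j) = univ) (c : Fin k → X)
    (h : μ E + ∑ j, μ (A j ∩ {y | ε / 2 ≤ ρ (c j) y}) < ENNReal.ofReal ε) :
    IsEpsCover μ ρ ε k := by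
  refine isEpsCover_of_centers hρ hρm c (lt_of_le_of_lt ?_ h)
  have hsub : {y | ∀ j, ε / 2 ≤ ρ (c j) y} ⊆ E ∪ ⋃ j, A j ∩ {y | ε / 2 ≤ ρ (c j) y} := by
    intro y hy
    obtain hyE | hyA := hEA.ge (mem_univ y)
    · exact .inl hyE
    · obtain ⟨j, hj⟩ := mem_iUnion.1 hyA
      exact .inr (mem_iUnion.2 ⟨j, hj, hy j⟩)
  calc μ {y | ∀ j, ε / 2 ≤ ρ (c j) y}
      ≤ μ (E ∪ ⋃ j, A j ∩ {y | ε / 2 ≤ ρ (c j) y}) := measure_mono hsub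
    _ ≤ μ E + μ (⋃ j, A j ∩ {y | ε / 2 ≤ ρ (c j) y}) := measure_union_le _ _
    _ ≤ μ E + ∑ j, μ (A j ∩ {y | ε / 2 ≤ ρ (c j) y}) := by
      gcongr
      exact measure_iUnion_fintype_le _ _

lemma IsEpsCover.epsEntropy_le (h : IsEpsCover μ ρ ε k) :
    epsEntropy μ ρ ε ≤ ENNReal.ofReal (Real.logb 2 k) :=
  sInf_le ⟨k, h, rfl⟩

lemma Admissible.exists_isEpsCover [IsFiniteMeasure μ] (hρa : Admissible μ ρ)
    (hρ : IsSemimetric ρ) (hε : 0 < ε) : ∃ k, IsEpsCover μ ρ ε k := by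
  obtain ⟨hm, S, -, hSc, hsep⟩ := hρa
  rcases S.eq_empty_or_nonempty with rfl | hS
  · rw [compl_empty] at hSc
    exact ⟨0, isEpsCover_of_measure_univ_lt (by simpa [hSc] using hε)⟩
  obtain ⟨d, hd⟩ := hsep.exists_seq_forall_exists_lt hS
  let F : ℕ → Set X := fun j => {y | ε / 2 ≤ ρ (d j) y}
  have hFm (j : ℕ) : MeasurableSet (F j) :=
    measurableSet_le measurable_const (hm.comp measurable_prodMk_left)
  have hnull : μ (⋂ j, F j) = 0 := by
    refine measure_mono_null (t := Sᶜ) (fun y hy hyS => ?_) hSc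
    obtain ⟨j, hj⟩ := hd y hyS (ε / 2) (half_pos hε)
    exact (hρ.comm y (d j) ▸ hj).not_ge (mem_iInter.1 hy j)
  have hlim := tendsto_measure_iInter_le (fun j => (hFm j).nullMeasurableSet)
    ⟨0, measure_ne_top μ _⟩
  rw [hnull] at hlim
  obtain ⟨n, hn⟩ := (hlim.eventually_lt_const (ENNReal.ofReal_pos.2 hε)).exists
  refine ⟨n + 1, isEpsCover_of_centers hρ hm (fun j : Fin (n + 1) => d j)
    (lt_of_le_of_lt (measure_mono fun y hy => ?_) hn)⟩
  exact mem_iInter₂.2 fun j hj => hy ⟨j, Nat.lt_succ_of_le hj⟩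

lemma Admissible.epsEntropy_ne_top [IsFiniteMeasure μ] (hρa : Admissible μ ρ)
    (hρ : IsSemimetric ρ) (hε : 0 < ε) : epsEntropy μ ρ ε ≠ ∞ :=
  let ⟨_, hk⟩ := hρa.exists_isEpsCover hρ hε
  ne_top_of_le_ne_top ENNReal.ofReal_ne_top hk.epsEntropy_le

lemma admissible_of_forall_exists_isEpsCover (hρm : Measurable (uncurry ρ))
    (h : ∀ ε : ℝ, 0 < ε → ∃ k, IsEpsCover μ ρ ε k) : Admissible μ ρ := by
  choose k hk using fun n : ℕ => h ((1 / 2) ^ n) (by positivity)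
  choose E A hEm _ hEA hE hA using fun n => isEpsCover_iff.1 (hk n)
  have hsum : ∑' n, μ (E n) ≠ ∞ :=
    ne_top_of_le_ne_top (summable_geometric_two.tsum_ofReal_ne_top)
      (ENNReal.tsum_le_tsum fun n => (hE n).le)
  refine ⟨hρm, {x | ∀ᶠ n in atTop, x ∉ E n}, ?_, ae_eventually_notMem hsum,
    separableOn_of_forall_exists_mem (A := fun i : Σ n, Fin (k n) => A i.1 i.2) ?_⟩
  · simp only [eventually_atTop, ofPred_exists, ofPred_forall]
    exact .iUnion fun _ => .iInter fun n => .iInter fun _ => (hEm n).compl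
  · intro x hx δ hδ
    have hpow : ∀ᶠ n : ℕ in atTop, ((1 : ℝ) / 2) ^ n < δ :=
      (tendsto_pow_atTop_nhds_zero_of_lt_one (by norm_num) (by norm_num)).eventually_lt_const hδ
    obtain ⟨n, hxn, hn⟩ := (hx.and hpow).exists
    obtain ⟨j, hj⟩ := mem_iUnion.1 (((hEA n).ge (mem_univ x)).resolve_left hxn)
    exact ⟨⟨n, j⟩, hj, fun y hy => (hA n j x hj y hy).trans hn⟩

-- Since the majorant `τ` is itself a semimetric, it is small on `Bᶜ × Bᶜ` as soon as `τ x₀` is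
-- small on `Bᶜ`: one exceptional set serves all pieces, whatever their number.
lemma IsEpsCover.of_mdist_lt [SFinite μ] (hε : 0 < ε) (hg : IsEpsCover μ g (ε / 6) k)
    (hρ : IsSemimetric ρ) (hρm : Measurable (uncurry ρ))
    (hd : mdist μ ρ g < ENNReal.ofReal (ε / 6) * (ENNReal.ofReal (ε / 6) * μ univ)) :
    IsEpsCover μ ρ ε k := by
  obtain ⟨τ, hτ, hlt⟩ := mnorm_lt_iff.1 hd
  obtain ⟨E, A, -, -, hEA, hE, hA⟩ := isEpsCover_iff.1 hg
  obtain ⟨x₀, hx₀⟩ := hτ.exists_measure_le_lt hlt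
  set B : Set X := {y | ε / 6 ≤ τ x₀ y}
  have hτlt (x y : X) (hx : x ∉ B) (hy : y ∉ B) : τ x y < ε / 6 + ε / 6 :=
    calc τ x y ≤ τ x₀ x + τ x₀ y :=
          hτ.isSemimetric.comm x x₀ ▸ hτ.isSemimetric.triangle x x₀ y
      _ < ε / 6 + ε / 6 := add_lt_add (not_le.1 hx) (not_le.1 hy)
  have hcenter (j : Fin k) : ∃ c, μ ((A j \ B) ∩ {y | ε / 2 ≤ ρ c y}) = 0 := by
    by_cases h0 : μ (A j \ B) = 0
    · exact ⟨x₀, measure_inter_null_of_null_left _ h0⟩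
    obtain ⟨c, ⟨hcA, hcB⟩, hc⟩ : ∃ c ∈ A j \ B, ∀ᵐ y ∂μ, |ρ c y - g c y| ≤ τ c y :=
      ((frequently_ae_mem_iff.2 h0).and_eventually (Measure.ae_ae_of_ae_prod hτ.abs_le)).exists
    refine ⟨c, measure_mono_null ?_ (ae_iff.1 hc)⟩
    rintro y ⟨⟨hyA, hyB⟩, hy⟩ hle
    have hgc := hA j c hcA y hyA
    have hτc := hτlt c y hcB hyB
    have hρc := (abs_le.1 hle).2
    simp only [mem_ofPred_eq] at hy
    linarith
  choose c hc using hcenter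
  refine isEpsCover_of_centers_of_pieces hρ hρm (E := E ∪ B) (A := fun j => A j \ B) ?_ c ?_
  · rw [← iUnion_sdiff, union_assoc, union_sdiff_self, union_left_comm, hEA, union_univ]
  · simp only [hc, Finset.sum_const_zero, add_zero]
    calc μ (E ∪ B) ≤ μ E + μ B := measure_union_le _ _
      _ < ENNReal.ofReal (ε / 6) + ENNReal.ofReal (ε / 6) := ENNReal.add_lt_add hE hx₀
      _ = ENNReal.ofReal (ε / 6 + ε / 6) :=
          (ENNReal.ofReal_add (by positivity) (by positivity)).symm
      _ ≤ ENNReal.ofReal ε := ENNReal.ofReal_le_ofReal (by linarith)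

lemma exists_pos_forall_isEpsCover_of_mdist_lt (μ : Measure X) [SFinite μ] (hε : 0 < ε) :
    ∃ δ : ℝ≥0∞, 0 < δ ∧ ∀ ρ g : X → X → ℝ, IsSemimetric ρ → Measurable (uncurry ρ) →
      mdist μ ρ g < δ → ∀ k, IsEpsCover μ g (ε / 6) k → IsEpsCover μ ρ ε k := by
  rcases eq_zero_or_neZero μ with rfl | _
  · exact ⟨1, one_pos, fun _ _ _ _ _ _ _ => isEpsCover_of_measure_univ_lt (by simpa using hε)⟩
  refine ⟨ENNReal.ofReal (ε / 6) * (ENNReal.ofReal (ε / 6) * μ univ),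
    by simp [pos_iff_ne_zero, hε, NeZero.ne μ], fun ρ g hρ hρm hd k hg => ?_⟩
  exact hg.of_mdist_lt hε hρ hρm hd

lemma exists_measure_inter_le [SFinite μ] [Nonempty X] (hρm : Measurable (uncurry ρ))
    (hgm : Measurable (uncurry g)) {r s : ℝ} {A : Set X} (hA : ∀ x ∈ A, ∀ y ∈ A, g x y < r)
    {η : ℝ≥0∞} (h : μ.prod μ {p | s ≤ |ρ p.1 p.2 - g p.1 p.2|} < η * η) :
    ∃ c, μ (A ∩ {y | r + s ≤ ρ c y}) ≤ η := by
  rcases le_or_gt (μ A) η with hAη | hηA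
  · exact ⟨Classical.arbitrary X, (measure_mono inter_subset_left).trans hAη⟩
  have hmeas : MeasurableSet {p : X × X | s ≤ |ρ p.1 p.2 - g p.1 p.2|} :=
    measurableSet_le measurable_const (hρm.sub hgm).abs
  obtain ⟨c, hcA, hc⟩ :=
    exists_mem_measure_preimage_prodMk_lt (A := A) hmeas (h.trans_le (by gcongr))
  refine ⟨c, (measure_mono ?_).trans hc.le⟩
  rintro y ⟨hyA, hy⟩
  have hgr := hA c hcA y hyA
  have habs := le_abs_self (ρ c y - g c y)
  simp only [mem_ofPred_eq, mem_preimage] at hy ⊢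
  linarith

lemma IsEpsCover.of_measure_lt [SFinite μ] (hε : 0 < ε) (hg : IsEpsCover μ g (ε / 4) k)
    (hgm : Measurable (uncurry g)) (hρ : IsSemimetric ρ) (hρm : Measurable (uncurry ρ))
    {η : ℝ≥0∞} (hη : k * η ≤ ENNReal.ofReal (ε / 2))
    (h : μ.prod μ {p | ε / 4 ≤ |ρ p.1 p.2 - g p.1 p.2|} < η * η) : IsEpsCover μ ρ ε k := by
  rcases isEmpty_or_nonempty X with _ | _
  · exact isEpsCover_of_measure_univ_lt (by simpa [univ_eq_empty_iff.2 ‹_›] using hε)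
  obtain ⟨E, A, -, -, hEA, hE, hA⟩ := isEpsCover_iff.1 hg
  choose c hc using fun j => exists_measure_inter_le hρm hgm (hA j) h
  have hhalf : ε / 4 + ε / 4 = ε / 2 := by ring
  refine isEpsCover_of_centers_of_pieces hρ hρm hEA c ?_
  calc μ E + ∑ j, μ (A j ∩ {y | ε / 2 ≤ ρ (c j) y}) ≤ μ E + ∑ _j : Fin k, η := by
        gcongr with j
        simpa only [hhalf] using hc j
    _ = μ E + k * η := by simp
    _ < ENNReal.ofReal (ε / 4) + ENNReal.ofReal (ε / 2) :=
        ENNReal.add_lt_add_of_lt_of_le (ne_top_of_le_ne_top ENNReal.ofReal_ne_top hη) hE hη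
    _ = ENNReal.ofReal (ε / 4 + ε / 2) :=
        (ENNReal.ofReal_add (by positivity) (by positivity)).symm
    _ ≤ ENNReal.ofReal ε := ENNReal.ofReal_le_ofReal (by linarith)

lemma IsEpsCover.eventually_of_tendstoInMeasure [SFinite μ] (hε : 0 < ε)
    (hg : IsEpsCover μ g (ε / 4) k) (hgm : Measurable (uncurry g)) {ι : Type*} {l : Filter ι}
    {v : ι → X → X → ℝ} (hv : ∀ i, IsSemimetric (v i)) (hvm : ∀ i, Measurable (uncurry (v i)))
    (hlim : TendstoInMeasure (μ.prod μ) (fun i => uncurry (v i)) l (uncurry g)) :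
    ∀ᶠ i in l, IsEpsCover μ (v i) ε k := by
  have hη : ENNReal.ofReal (ε / 2) / k ≠ 0 :=
    (ENNReal.div_pos (ENNReal.ofReal_pos.2 (by positivity)).ne' (ENNReal.natCast_ne_top k)).ne'
  have hsmall := (tendstoInMeasure_iff_dist.1 hlim (ε / 4) (by positivity)).eventually_lt_const
    (ENNReal.mul_pos hη hη)
  filter_upwards [hsmall] with i hi
  exact hg.of_measure_lt hε hgm (hv i) (hvm i) ENNReal.mul_div_le hi

end EpsEntropy

section Admissible

variable {X : Type*} [MeasurableSpace X] {μ : Measure X} [IsFiniteMeasure μ]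
  {M : Set (X → X → ℝ)} {ε : ℝ}

lemma admissible_of_memClosureIn_mdist (hM : ∀ σ ∈ M, IsSemimetric σ ∧ Admissible μ σ)
    {g : X → X → ℝ} (hg : IsSemimetric g) (hgm : Measurable (uncurry g))
    (hgM : MemClosureIn (mdist μ) M g) : Admissible μ g := by
  refine admissible_of_forall_exists_isEpsCover hgm fun ε hε => ?_
  obtain ⟨δ, hδ, hcover⟩ := exists_pos_forall_isEpsCover_of_mdist_lt μ hε
  obtain ⟨σ, hσ, hgσ⟩ := hgM δ hδ
  obtain ⟨k, hk⟩ := (hM σ hσ).2.exists_isEpsCover (hM σ hσ).1 (ε := ε / 6) (by positivity)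
  exact ⟨k, hcover g σ hg hgm hgσ k hk⟩

theorem exists_forall_epsEntropy_le_of_totallyBoundedIn
    (hM : ∀ σ ∈ M, IsSemimetric σ ∧ Admissible μ σ) (hpre : TotallyBoundedIn (mdist μ) M)
    (hε : 0 < ε) : ∃ C : ℝ≥0∞, C ≠ ∞ ∧ ∀ ρ ∈ M, epsEntropy μ ρ ε ≤ C := by
  obtain ⟨δ, hδ, hcover⟩ := exists_pos_forall_isEpsCover_of_mdist_lt μ hε
  obtain ⟨T, hTM, hT, hMT⟩ := EMetric.totallyBounded_iff'.1 (totallyBoundedIn_mdist_iff.1 hpre) δ hδ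
  obtain ⟨C, hC, hTC⟩ := exists_ne_top_forall_mem_le hT fun σ hσ =>
    (hM σ (hTM hσ)).2.epsEntropy_ne_top (hM σ (hTM hσ)).1 (ε := ε / 6) (by positivity)
  refine ⟨C, hC, fun ρ hρ => ?_⟩
  obtain ⟨σ, hσ, hρσ⟩ := mem_iUnion₂.1 (hMT hρ)
  refine le_trans (sInf_le_sInf ?_) (hTC σ hσ)
  rintro _ ⟨k, hk, rfl⟩
  exact ⟨k, hcover ρ σ (hM ρ hρ).1 (hM ρ hρ).2.1 hρσ k hk, rfl⟩

theorem exists_forall_epsEntropy_le_of_tendstoInMeasure {u : ℕ → X → X → ℝ} {ρ : X → X → ℝ}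
    (hu : ∀ n, IsSemimetric (u n) ∧ Admissible μ (u n)) (hρ : IsSemimetric ρ)
    (hρa : Admissible μ ρ)
    (hlim : TendstoInMeasure (μ.prod μ) (fun n => uncurry (u n)) atTop (uncurry ρ)) (hε : 0 < ε) :
    ∃ C : ℝ≥0∞, C ≠ ∞ ∧ ∀ n, epsEntropy μ (u n) ε ≤ C := by
  obtain ⟨k, hk⟩ := hρa.exists_isEpsCover hρ (ε := ε / 4) (by positivity)
  have hcover := hk.eventually_of_tendstoInMeasure hε hρa.1 (fun n => (hu n).1)
    (fun n => (hu n).2.1) hlim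
  exact exists_ne_top_forall_le_of_eventually_le (fun n => (hu n).2.epsEntropy_ne_top (hu n).1 hε)
    ENNReal.ofReal_ne_top (hcover.mono fun n hn => hn.epsEntropy_le)

end Admissible

theorem statement12_general {X : Type*} [MeasurableSpace X] (μ : Measure X) [IsFiniteMeasure μ]
    (M : Set (X → X → ℝ)) (hM : ∀ ρ ∈ M, IsSemimetric ρ ∧ Admissible μ ρ)
    (hpre : TotallyBoundedIn (mdist μ) M) :
    (∀ f : X → X → ℝ, Measurable (uncurry f) →
      (MemClosureIn (L1dist μ) M f ↔ MemClosureIn (mdist μ) M f)) ∧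
    (∀ f : X → X → ℝ, Measurable (uncurry f) → MemClosureIn (L1dist μ) M f →
      ∃ g : X → X → ℝ, IsSemimetric g ∧ Admissible μ g ∧
        ∀ᵐ p ∂(μ.prod μ), f p.1 p.2 = g p.1 p.2) ∧
    (∀ ε : ℝ, 0 < ε → ∃ C : ℝ≥0∞, C ≠ ∞ ∧ ∀ ρ ∈ M, epsEntropy μ ρ ε ≤ C) ∧
    ∀ (u : ℕ → X → X → ℝ) (ρ : X → X → ℝ), (∀ n, IsSemimetric (u n) ∧ Admissible μ (u n)) →
      IsSemimetric ρ → Admissible μ ρ → Tendsto (fun n => L1dist μ (u n) ρ) atTop (nhds 0) →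
      ∀ ε : ℝ, 0 < ε → ∃ C : ℝ≥0∞, C ≠ ∞ ∧ ∀ n, epsEntropy μ (u n) ε ≤ C := by
  have hclosure {f : X → X → ℝ} (hfm : Measurable (uncurry f)) :
      MemClosureIn (L1dist μ) M f ↔ MemClosureIn (mdist μ) M f :=
    memClosureIn_L1dist_iff_mdist (fun σ hσ => (hM σ hσ).2.1) hpre hfm
  refine ⟨fun f => hclosure, fun f hfm hf => ?_,
    fun ε => exists_forall_epsEntropy_le_of_totallyBoundedIn hM hpre,
    fun u ρ hu hρ hρa hlim ε => exists_forall_epsEntropy_le_of_tendstoInMeasure hu hρ hρa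
      (tendstoInMeasure_of_tendsto_L1dist (fun n => (hu n).2.1) hρa.1 hlim)⟩
  obtain ⟨g, hg, hgm, hfg⟩ :=
    hf.exists_isSemimetric_ae_eq (fun σ hσ => ⟨(hM σ hσ).1, (hM σ hσ).2.1⟩) hfm
  have hgM : MemClosureIn (mdist μ) M g := ((hclosure hfm).1 hf).congr_ae hfg.symm
  exact ⟨g, hg, admissible_of_memClosureIn_mdist hM hg hgm hgM, hfg⟩

/-- if a set `M` of admissible summable semimetrics is precompact in the
m-norm, then (a) for measurable functions, membership in the `L¹`-closure of `M` and in
the m-norm closure of `M` coincide; (b) every measurable function in this closure is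
`μ×μ`-a.e. equal to an admissible semimetric; (c) for every fixed `ε > 0` the
`ε`-entropies of elements of `M` are uniformly bounded; (d) in particular, if a sequence
of admissible summable semimetrics converges in `L¹` to an admissible semimetric, then
for every `ε > 0` its `ε`-entropies are uniformly bounded. -/
theorem statement12 {X : Type*} [MeasurableSpace X] [StandardBorelSpace X]
    (μ : Measure X) [IsProbabilityMeasure μ] (M : Set (X → X → ℝ))
    (hM : ∀ ρ ∈ M, IsSemimetric ρ ∧ Admissible μ ρ ∧
      Integrable (Function.uncurry ρ) (μ.prod μ))
    (hpre : TotallyBoundedIn (mdist μ) M) :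
    (∀ f : X → X → ℝ, Measurable (Function.uncurry f) →
      ((∀ ε : ℝ≥0∞, 0 < ε → ∃ σ ∈ M, L1dist μ f σ < ε) ↔
        (∀ ε : ℝ≥0∞, 0 < ε → ∃ σ ∈ M, mdist μ f σ < ε))) ∧
    (∀ f : X → X → ℝ, Measurable (Function.uncurry f) →
      (∀ ε : ℝ≥0∞, 0 < ε → ∃ σ ∈ M, L1dist μ f σ < ε) →
      ∃ g : X → X → ℝ, IsSemimetric g ∧ Admissible μ g ∧
        ∀ᵐ p ∂(μ.prod μ), f p.1 p.2 = g p.1 p.2) ∧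
    (∀ ε : ℝ, 0 < ε → ∃ C : ℝ≥0∞, C ≠ ∞ ∧ ∀ ρ ∈ M, epsEntropy μ ρ ε ≤ C) ∧
    ∀ (u : ℕ → X → X → ℝ) (ρ : X → X → ℝ),
      (∀ n, IsSemimetric (u n) ∧ Admissible μ (u n) ∧
        Integrable (Function.uncurry (u n)) (μ.prod μ)) →
      IsSemimetric ρ → Admissible μ ρ →
      Tendsto (fun n => L1dist μ (u n) ρ) atTop (nhds 0) →
      ∀ ε : ℝ, 0 < ε → ∃ C : ℝ≥0∞, C ≠ ∞ ∧ ∀ n, epsEntropy μ (u n) ε ≤ C := by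
  obtain ⟨hclosure, hadm, hentropy, hseq⟩ :=
    statement12_general μ M (fun ρ hρ => ⟨(hM ρ hρ).1, (hM ρ hρ).2.1⟩) hpre
  exact ⟨hclosure, hadm, hentropy, fun u ρ hu => hseq u ρ fun n => ⟨(hu n).1, (hu n).2.1⟩⟩
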